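/- Let k ≥ 3 and r ≥ 2 be integers and let a = (a_1,…,a_r) ∈ ℕ^r_{k−1}. For every θ > 0 there exists n_0 such that the following holds for all n ≥ n_0: if V = (V_1,…,V_r) is a partition of an n-element vertex set with |V_i| = (1+ε_i)·(r·a_i+1)·n/(rk) for each i ∈ [r], and ε := max_{1 ≤ i ≤ r} |ε_i| ≤ 1/(2k), then δ(H(V,a)) ≤ (1 + 4kε + θ)·C(n−1,k−1)·g_r(a). -/

import Mathlib

open Finset

def HyperUniform {V : Type*} (k : ℕ) (H : Finset (Finset V)) : Prop := ∀ e ∈ H, e.card = k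

def IsPM {V : Type*} [Fintype V] (H M : Finset (Finset V)) : Prop :=
  M ⊆ H ∧ (∀ e ∈ M, ∀ f ∈ M, e ≠ f → Disjoint e f) ∧ ∀ v : V, ∃ e ∈ M, v ∈ e

def hdeg {V : Type*} [DecidableEq V] (H : Finset (Finset V)) (v : V) : ℕ :=
  (H.filter (fun e => v ∈ e)).card

def IsVec (k r : ℕ) (a : ℕ → ℕ) : Prop :=
  (∀ i j : ℕ, i ≤ j → j < r → a i ≤ a j) ∧ (∑ i ∈ Finset.range r, a i) = k - 1

noncomputable def gfun (k r : ℕ) (a : ℕ → ℕ) : ℝ :=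
  (((k - 1).factorial : ℝ) / (∏ i ∈ Finset.range r, ((a i).factorial : ℝ))) *
    (∏ i ∈ Finset.range r, (((r * a i + 1 : ℕ) : ℝ) / ((r * k : ℕ) : ℝ)) ^ (a i)) *
    (1 + ((a 0 : ℝ) / ((r * a 0 + 1 : ℕ) : ℝ)) *
      ∑ i ∈ Finset.Ico 1 r, ((r * a i + 1 : ℕ) : ℝ) / ((a i + 1 : ℕ) : ℝ))

noncomputable def gThr (k r : ℕ) : ℝ :=
  sSup {x : ℝ | ∃ a : ℕ → ℕ, IsVec k r a ∧ x = gfun k r a}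

def HVa {W : Type*} [Fintype W] [DecidableEq W] (r : ℕ) (P : ℕ → Finset W) (a : ℕ → ℕ) :
    Finset (Finset W) :=
  (Finset.univ : Finset W).powerset.filter (fun e =>
    ∃ i ∈ Finset.range r, (e ∩ P i).card = a i + 1 ∧
      ∀ j ∈ Finset.range r, j ≠ i → (e ∩ P j).card = a j)

noncomputable def minDeg {W : Type*} [Fintype W] [DecidableEq W] (H : Finset (Finset W)) : ℕ :=
  sInf (Set.range fun v : W => hdeg H v)

/-!
Fix a vertex `v` of the first class. An edge of `H(V, a)` through `v` whose excess lies in the class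
`V_i` becomes, once `v` is erased, a set of `k - 1` vertices with index vector `a + e_i - e_0`. A
family of sets with index vector `c` has at most
`∏ j, C(|V_j|, c_j) ≤ ∏ j, |V_j| ^ c_j / c_j!` members, and bounding each `|V_j|` by
`(1 + ε) n p_j` with `p_j = (r a_j + 1) / (r k)` gives `((1 + ε) n) ^ (k - 1)` times a weight that
depends only on `c`. Summed over `i`, these weights are exactly `g_r(a) / (k - 1)!`.
-/

section Estimates

lemma one_add_pow_le_one_add_two_mul {x : ℝ} {m : ℕ} (hx : 0 ≤ x) (hmx : m * x ≤ 1) :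
    (1 + x) ^ m ≤ 1 + 2 * (m * x) := by
  have hmx₀ : 0 ≤ m * x := by positivity
  have hexp := (abs_le.1 (Real.abs_exp_sub_one_le (abs_le.2 ⟨by linarith, hmx⟩))).2
  calc (1 + x) ^ m ≤ Real.exp x ^ m := by
        gcongr
        linarith [Real.add_one_le_exp x]
    _ = Real.exp (m * x) := (Real.exp_nat_mul x m).symm
    _ ≤ 1 + 2 * (m * x) := by
        rw [abs_of_nonneg hmx₀] at hexp
        linarith

lemma one_add_half_mul_one_add_pow_le {x t : ℝ} {m k : ℕ} (hmk : m ≤ k) (hx : 0 ≤ x)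
    (hkx : x ≤ 1 / (2 * (k : ℝ))) (ht : 0 ≤ t) :
    (1 + t / 2) * (1 + x) ^ m ≤ 1 + 4 * (k : ℝ) * x + t := by
  have hmx : m * x ≤ k * x := by gcongr
  have hkx' : k * x ≤ 1 / 2 :=
    calc k * x ≤ k * (1 / (2 * (k : ℝ))) := by gcongr
      _ = k / k / 2 := by ring
      _ ≤ 1 / 2 := by
        gcongr
        exact div_self_le_one _
  calc (1 + t / 2) * (1 + x) ^ m ≤ (1 + t / 2) * (1 + 2 * (m * x)) := by
        gcongr
        exact one_add_pow_le_one_add_two_mul hx (by linarith)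
    _ ≤ (1 + t / 2) * (1 + 2 * (k * x)) := by gcongr
    _ ≤ 1 + 4 * (k : ℝ) * x + t := by nlinarith [mul_nonneg k.cast_nonneg hx]

lemma eventually_pow_le_mul_choose_pred (m : ℕ) {t : ℝ} (ht : 0 < t) :
    ∀ᶠ n : ℕ in Filter.atTop,
      (n : ℝ) ^ m ≤ (1 + t) * ((n - 1).choose m : ℝ) * (m.factorial : ℝ) := by
  filter_upwards [(isEquivalent_descFactorial (m + 1)).symm.isLittleO.def ht,
    Filter.eventually_gt_atTop 0] with n hn hn₀
  obtain ⟨l, rfl⟩ := Nat.exists_eq_add_one.2 hn₀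
  have hpow : ((l + 1 : ℕ) : ℝ) ^ (m + 1) ≤ (1 + t) * ((l + 1).descFactorial (m + 1) : ℝ) := by
    rw [Pi.sub_apply, Real.norm_natCast] at hn
    linarith [(Real.le_norm_self _).trans hn]
  rw [Nat.succ_descFactorial_succ, Nat.descFactorial_eq_factorial_mul_choose, pow_succ'] at hpow
  rw [Nat.add_sub_cancel]
  push_cast at hpow ⊢
  refine le_of_mul_le_mul_left (hpow.trans_eq ?_) (by positivity : (0 : ℝ) < l + 1)
  ring

end Estimates

section IndexWeight

variable {ι : Type*} {I : Finset ι} {p : ι → ℝ}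

/-- The limiting density of the sets with index vector `c` among classes of sizes `p i * n`, counted
in units of `n ^ (∑ i ∈ I, c i)`. -/
noncomputable def indexWeight (I : Finset ι) (p : ι → ℝ) (c : ι → ℕ) : ℝ :=
  ∏ i ∈ I, p i ^ c i / ((c i).factorial : ℝ)

lemma indexWeight_congr {c d : ι → ℕ} (h : ∀ i ∈ I, c i = d i) :
    indexWeight I p c = indexWeight I p d :=
  prod_congr rfl fun i hi => by rw [h i hi]

variable [DecidableEq ι]

lemma sum_add_single_one {s : ι} (hs : s ∈ I) (c : ι → ℕ) :
    ∑ i ∈ I, (c + Pi.single s 1 : ι → ℕ) i = (∑ i ∈ I, c i) + 1 := by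
  simp only [Pi.add_apply, sum_add_distrib, sum_pi_single', hs, if_true]

lemma indexWeight_add_single_one {s : ι} (hs : s ∈ I) (c : ι → ℕ) :
    indexWeight I p (c + Pi.single s 1) = indexWeight I p c * (p s / (c s + 1)) := by
  have hrest : indexWeight (I.erase s) p (c + Pi.single s 1) = indexWeight (I.erase s) p c :=
    indexWeight_congr fun i hi => by
      rw [Pi.add_apply, Pi.single_eq_of_ne (ne_of_mem_erase hi), add_zero]
  unfold indexWeight at hrest ⊢
  rw [← mul_prod_erase _ _ hs, ← mul_prod_erase _ _ hs, hrest, Pi.add_apply, Pi.single_eq_same,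
    Nat.factorial_succ]
  push_cast
  field_simp
  ring

/-- Each term on the left is the weight of the index vector `a + e_i - e_s`, and is zero if that
vector has a negative entry. -/
lemma sum_indexWeight_add_single_one_mul {s : ι} (hs : s ∈ I) (hp : p s ≠ 0) (a : ι → ℕ) :
    ∑ i ∈ I, indexWeight I p (a + Pi.single i 1) * ((a + Pi.single i 1 : ι → ℕ) s / p s) =
      indexWeight I p a * (1 + a s / p s * ∑ i ∈ I.erase s, p i / (a i + 1)) := by
  have hself : indexWeight I p (a + Pi.single s 1) * ((a + Pi.single s 1 : ι → ℕ) s / p s) =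
      indexWeight I p a := by
    rw [indexWeight_add_single_one hs, Pi.add_apply, Pi.single_eq_same]
    push_cast
    field_simp
  have hother : ∀ i ∈ I.erase s,
      indexWeight I p (a + Pi.single i 1) * ((a + Pi.single i 1 : ι → ℕ) s / p s) =
        indexWeight I p a * (a s / p s * (p i / (a i + 1))) := fun i hi => by
    rw [indexWeight_add_single_one (mem_of_mem_erase hi), Pi.add_apply,
      Pi.single_eq_of_ne (ne_of_mem_erase hi).symm, add_zero]
    ring
  rw [← add_sum_erase _ _ hs, hself, sum_congr rfl hother, ← mul_sum, ← mul_sum]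
  ring

end IndexWeight

section IndexFamily

variable {ι W : Type*} [Fintype W] [DecidableEq W] {I : Finset ι} {P : ι → Finset W}

/-- The family of all vertex sets with index vector `c` relative to the classes `P i`, `i ∈ I`. -/
def indexFamily (I : Finset ι) (P : ι → Finset W) (c : ι → ℕ) : Finset (Finset W) :=
  univ.filter fun e => ∀ i ∈ I, (e ∩ P i).card = c i

lemma mem_indexFamily {c : ι → ℕ} {e : Finset W} :
    e ∈ indexFamily I P c ↔ ∀ i ∈ I, (e ∩ P i).card = c i := by
  simp only [indexFamily, mem_filter_univ]

lemma card_indexFamily_le_prod_choose (hcov : ∀ x, ∃ i ∈ I, x ∈ P i) (c : ι → ℕ) :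
    (indexFamily I P c).card ≤ ∏ i ∈ I, (P i).card.choose (c i) := by
  classical
  have hpi : ∏ i ∈ I, (P i).card.choose (c i) = (I.pi fun i => powersetCard (c i) (P i)).card := by
    simp only [card_pi, card_powersetCard]
  rw [hpi]
  refine card_le_card_of_injOn (fun e i _ => e ∩ P i) (fun e he => ?_) fun e _ f _ hef => ?_
  · exact mem_pi.2 fun i hi =>
      mem_powersetCard.2 ⟨inter_subset_right, mem_indexFamily.1 he i hi⟩
  · ext x
    obtain ⟨i, hi, hx⟩ := hcov x
    have htrace : e ∩ P i = f ∩ P i := congrFun (congrFun hef i) hi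
    simpa only [mem_inter, hx, and_true] using Finset.ext_iff.1 htrace x

lemma card_indexFamily_le {p : ι → ℝ} {B : ℝ} (hcov : ∀ x, ∃ i ∈ I, x ∈ P i)
    (hcard : ∀ i ∈ I, ((P i).card : ℝ) ≤ B * p i) (c : ι → ℕ) :
    ((indexFamily I P c).card : ℝ) ≤ B ^ (∑ i ∈ I, c i) * indexWeight I p c :=
  calc ((indexFamily I P c).card : ℝ) ≤ ∏ i ∈ I, ((P i).card.choose (c i) : ℝ) := by
        exact_mod_cast card_indexFamily_le_prod_choose hcov c
    _ ≤ ∏ i ∈ I, B ^ c i * (p i ^ c i / ((c i).factorial : ℝ)) :=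
        prod_le_prod (fun _ _ => Nat.cast_nonneg _) fun i hi => by
          rw [← mul_div_assoc, ← mul_pow]
          refine (Nat.choose_le_pow_div _ _).trans ?_
          gcongr
          exact hcard i hi
    _ = B ^ (∑ i ∈ I, c i) * indexWeight I p c := by
        rw [prod_mul_distrib, prod_pow_eq_pow_sum, indexWeight]

lemma hdeg_indexFamily_eq_zero {s : ι} {v : W} (hs : s ∈ I) (hv : v ∈ P s) {c : ι → ℕ}
    (hc : c s = 0) : hdeg (indexFamily I P c) v = 0 := by
  refine card_eq_zero.2 (filter_eq_empty_iff.2 fun e he hve => ?_)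
  have hempty : e ∩ P s = ∅ := card_eq_zero.1 ((mem_indexFamily.1 he s hs).trans hc)
  exact eq_empty_iff_forall_notMem.1 hempty v (mem_inter.2 ⟨hve, hv⟩)

lemma hdeg_indexFamily_add_single_one_le [DecidableEq ι] {s : ι} {v : W} (hv : v ∈ P s)
    (hv' : ∀ i ∈ I, i ≠ s → v ∉ P i) (c : ι → ℕ) :
    hdeg (indexFamily I P (c + Pi.single s 1)) v ≤ (indexFamily I P c).card := by
  refine card_le_card_of_injOn (fun e => e.erase v) (fun e he => ?_)
    ((erase_injOn' v).mono fun e he => (mem_filter.1 he).2)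
  obtain ⟨he, hve⟩ := mem_filter.1 he
  refine mem_indexFamily.2 fun i hi => ?_
  have hci := mem_indexFamily.1 he i hi
  rw [erase_inter]
  rcases eq_or_ne i s with rfl | his
  · rw [card_erase_of_mem (mem_inter.2 ⟨hve, hv⟩), hci, Pi.add_apply, Pi.single_eq_same,
      Nat.add_sub_cancel]
  · rw [erase_eq_of_notMem fun h => hv' i hi his (mem_inter.1 h).2, hci, Pi.add_apply,
      Pi.single_eq_of_ne his, add_zero]

lemma hdeg_indexFamily_le {s : ι} {v : W} {p : ι → ℝ} {B : ℝ} (hs : s ∈ I) (hv : v ∈ P s)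
    (hv' : ∀ i ∈ I, i ≠ s → v ∉ P i) (hcov : ∀ x, ∃ i ∈ I, x ∈ P i) (hp : p s ≠ 0)
    (hcard : ∀ i ∈ I, ((P i).card : ℝ) ≤ B * p i) {c : ι → ℕ} {m : ℕ}
    (hc : ∑ i ∈ I, c i = m + 1) :
    (hdeg (indexFamily I P c) v : ℝ) ≤ B ^ m * (indexWeight I p c * (c s / p s)) := by
  classical
  rcases Nat.eq_zero_or_pos (c s) with hcs | hcs
  · simp [hdeg_indexFamily_eq_zero hs hv hcs, hcs]
  obtain ⟨b, rfl⟩ : ∃ b, c = b + Pi.single s 1 :=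
    have hle : Pi.single s 1 ≤ c := update_le_iff.2 ⟨hcs, fun i _ => (c i).zero_le⟩
    ⟨c - Pi.single s 1, (tsub_add_cancel_of_le hle).symm⟩
  have hb : ∑ i ∈ I, b i = m := by
    rw [sum_add_single_one hs] at hc
    exact Nat.succ_injective hc
  calc (hdeg (indexFamily I P (b + Pi.single s 1)) v : ℝ) ≤ ((indexFamily I P b).card : ℝ) := by
        exact_mod_cast hdeg_indexFamily_add_single_one_le hv hv' b
    _ ≤ B ^ m * indexWeight I p b := hb ▸ card_indexFamily_le hcov hcard b
    _ = _ := by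
        rw [indexWeight_add_single_one hs, Pi.add_apply, Pi.single_eq_same]
        push_cast
        field_simp

end IndexFamily

section HVa

variable {W : Type*} [Fintype W] [DecidableEq W] {r : ℕ} {P : ℕ → Finset W} {v : W}

lemma HVa_eq_biUnion_indexFamily (r : ℕ) (P : ℕ → Finset W) (a : ℕ → ℕ) :
    HVa r P a = (range r).biUnion fun i => indexFamily (range r) P (a + Pi.single i 1) := by
  ext e
  simp only [HVa, mem_filter, mem_biUnion, mem_indexFamily, mem_powerset, subset_univ, true_and]
  refine exists_congr fun i => and_congr_right fun hi => ⟨fun ⟨hei, hej⟩ j hj => ?_, fun he => ?_⟩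
  · rcases eq_or_ne j i with rfl | hji
    · simp [hei]
    · simp [hej j hj hji, hji]
  · exact ⟨by simpa using he i hi, fun j hj hji => by simpa [hji] using he j hj⟩

lemma hdeg_HVa_le_sum (r : ℕ) (P : ℕ → Finset W) (a : ℕ → ℕ) (v : W) :
    hdeg (HVa r P a) v ≤
      ∑ i ∈ range r, hdeg (indexFamily (range r) P (a + Pi.single i 1)) v := by
  rw [HVa_eq_biUnion_indexFamily, hdeg, filter_biUnion]
  exact card_biUnion_le

lemma hdeg_HVa_le {s : ℕ} {p : ℕ → ℝ} {B : ℝ} (hs : s < r) (hv : v ∈ P s)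
    (hv' : ∀ i < r, i ≠ s → v ∉ P i) (hcov : ∀ x, ∃ i, i < r ∧ x ∈ P i) (hp : p s ≠ 0)
    (hcard : ∀ i < r, ((P i).card : ℝ) ≤ B * p i) (a : ℕ → ℕ) :
    (hdeg (HVa r P a) v : ℝ) ≤ B ^ (∑ i ∈ range r, a i) *
      (indexWeight (range r) p a * (1 + a s / p s * ∑ i ∈ (range r).erase s, p i / (a i + 1))) := by
  simp only [← mem_range] at hs hv' hcov hcard
  rw [← sum_indexWeight_add_single_one_mul hs hp, mul_sum]
  calc (hdeg (HVa r P a) v : ℝ)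
      ≤ ∑ i ∈ range r, (hdeg (indexFamily (range r) P (a + Pi.single i 1)) v : ℝ) := by
        exact_mod_cast hdeg_HVa_le_sum r P a v
    _ ≤ _ := sum_le_sum fun i hi =>
        hdeg_indexFamily_le hs hv hv' hcov hp hcard (sum_add_single_one hi a)

lemma minDeg_le_hdeg (H : Finset (Finset W)) (v : W) : minDeg H ≤ hdeg H v :=
  Nat.sInf_le ⟨v, rfl⟩

end HVa

section ClassDensity

variable {k r : ℕ}

/-- The unperturbed proportion `(r a_i + 1) / (r k)` of the vertices lying in the class `V_i`. -/
noncomputable def classDensity (k r : ℕ) (a : ℕ → ℕ) (i : ℕ) : ℝ :=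
  ((r * a i + 1 : ℕ) : ℝ) / ((r * k : ℕ) : ℝ)

lemma classDensity_pos (hk : k ≠ 0) (hr : r ≠ 0) (a : ℕ → ℕ) (i : ℕ) :
    0 < classDensity k r a i := by
  have := Nat.pos_of_ne_zero (mul_ne_zero hr hk)
  unfold classDensity
  positivity

lemma gfun_eq_factorial_mul_indexWeight (hk : k ≠ 0) (hr : r ≠ 0) (a : ℕ → ℕ) :
    gfun k r a = ((k - 1).factorial : ℝ) * (indexWeight (range r) (classDensity k r a) a *
      (1 + a 0 / classDensity k r a 0 *
        ∑ i ∈ (range r).erase 0, classDensity k r a i / (a i + 1))) := by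
  have hrk : ((r * k : ℕ) : ℝ) ≠ 0 := Nat.cast_ne_zero.2 (mul_ne_zero hr hk)
  have hIco : (range r).erase 0 = Ico 1 r := by
    ext i
    simp only [mem_erase, mem_range, mem_Ico]
    omega
  have hsum : (a 0 : ℝ) / classDensity k r a 0 *
      ∑ i ∈ (range r).erase 0, classDensity k r a i / (a i + 1) =
      (a 0 : ℝ) / ((r * a 0 + 1 : ℕ) : ℝ) *
        ∑ i ∈ Ico 1 r, ((r * a i + 1 : ℕ) : ℝ) / ((a i + 1 : ℕ) : ℝ) := by
    rw [hIco, mul_sum, mul_sum]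
    refine sum_congr rfl fun i _ => ?_
    rw [classDensity, classDensity, Nat.cast_add_one (a i)]
    field_simp
  rw [hsum, gfun, indexWeight, prod_div_distrib]
  simp only [classDensity]
  ring

lemma gfun_nonneg (k r : ℕ) (a : ℕ → ℕ) : 0 ≤ gfun k r a := by
  unfold gfun
  positivity

end ClassDensity

lemma minDeg_HVa_le {W : Type*} [Fintype W] [DecidableEq W] {k r : ℕ} (hk : k ≠ 0) (hr : r ≠ 0)
    {P : ℕ → Finset W} (hdisj : ∀ i j : ℕ, i < r → j < r → i ≠ j → Disjoint (P i) (P j))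
    (hcov : ∀ x : W, ∃ i, i < r ∧ x ∈ P i) (hP : (P 0).Nonempty) {a : ℕ → ℕ} {B : ℝ}
    (hcard : ∀ i < r, ((P i).card : ℝ) ≤ B * classDensity k r a i) :
    (minDeg (HVa r P a) : ℝ) ≤
      B ^ (∑ i ∈ range r, a i) * (gfun k r a / ((k - 1).factorial : ℝ)) := by
  obtain ⟨v, hv⟩ := hP
  have hr₀ := Nat.pos_of_ne_zero hr
  have hv' : ∀ i < r, i ≠ 0 → v ∉ P i := fun i hi hi₀ =>
    disjoint_left.1 (hdisj 0 i hr₀ hi hi₀.symm) hv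
  rw [gfun_eq_factorial_mul_indexWeight hk hr, mul_div_cancel_left₀ _ (by positivity)]
  calc (minDeg (HVa r P a) : ℝ) ≤ hdeg (HVa r P a) v := by exact_mod_cast minDeg_le_hdeg _ v
    _ ≤ _ := hdeg_HVa_le hr₀ hv hv' hcov (classDensity_pos hk hr a 0).ne' hcard a

theorem min_degree_perturbed_upper_general {k r : ℕ} (hk : k ≠ 0) (hr : r ≠ 0) {a : ℕ → ℕ}
    (ha : ∑ i ∈ range r, a i = k - 1) {θ : ℝ} (hθ : 0 < θ) :
    ∃ n₀ : ℕ, ∀ (W : Type*) [Fintype W] [DecidableEq W], n₀ ≤ Fintype.card W →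
      ∀ (P : ℕ → Finset W) (ε : ℕ → ℝ) (δ : ℝ),
      (∀ i j : ℕ, i < r → j < r → i ≠ j → Disjoint (P i) (P j)) →
      (∀ x : W, ∃ i, i < r ∧ x ∈ P i) →
      (∀ i, i < r → ((P i).card : ℝ) =
        (1 + ε i) * ((r * a i + 1 : ℕ) : ℝ) * (Fintype.card W : ℝ) / ((r * k : ℕ) : ℝ)) →
      (∀ i, i < r → |ε i| ≤ δ) → δ < 1 →
      (minDeg (HVa r P a) : ℝ) ≤ (1 + θ) * (1 + δ) ^ (k - 1) *
        (((Fintype.card W - 1).choose (k - 1) : ℕ) : ℝ) * gfun k r a := by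
  obtain ⟨n₀, hn₀⟩ := Filter.eventually_atTop.1
    ((eventually_pow_le_mul_choose_pred (k - 1) hθ).and (Filter.eventually_gt_atTop 0))
  refine ⟨n₀, fun W _ _ hW P ε δ hdisj hcov hcard hε hδ => ?_⟩
  obtain ⟨hpow, hW₀⟩ := hn₀ _ hW
  have hδ₀ : 0 ≤ δ := (abs_nonneg _).trans (hε 0 (Nat.pos_of_ne_zero hr))
  have hcard' : ∀ i < r,
      ((P i).card : ℝ) = (1 + ε i) * (Fintype.card W * classDensity k r a i) := fun i hi => by
    rw [hcard i hi, classDensity]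
    ring
  have hP : (P 0).Nonempty := by
    have hε₀ : 0 < 1 + ε 0 := by linarith [(abs_le.1 (hε 0 (Nat.pos_of_ne_zero hr))).1]
    have hp₀ := classDensity_pos hk hr a 0
    rw [← card_pos, ← Nat.cast_pos (α := ℝ), hcard' 0 (Nat.pos_of_ne_zero hr)]
    positivity
  have hcard_le : ∀ i < r,
      ((P i).card : ℝ) ≤ (1 + δ) * Fintype.card W * classDensity k r a i := fun i hi => by
    have hp := (classDensity_pos hk hr a i).le
    rw [hcard' i hi, mul_assoc]
    gcongr
    exact (abs_le.1 (hε i hi)).2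
  have hg := gfun_nonneg k r a
  calc (minDeg (HVa r P a) : ℝ)
      ≤ ((1 + δ) * Fintype.card W) ^ (k - 1) * (gfun k r a / ((k - 1).factorial : ℝ)) :=
        ha ▸ minDeg_HVa_le hk hr hdisj hcov hP hcard_le
    _ = (1 + δ) ^ (k - 1) * (Fintype.card W : ℝ) ^ (k - 1) *
        (gfun k r a / ((k - 1).factorial : ℝ)) := by rw [mul_pow]
    _ ≤ (1 + δ) ^ (k - 1) * ((1 + θ) * ((Fintype.card W - 1).choose (k - 1) : ℝ) *
        ((k - 1).factorial : ℝ)) * (gfun k r a / ((k - 1).factorial : ℝ)) := by gcongr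
    _ = _ := by field_simp

theorem min_degree_perturbed_upper (k r : ℕ) (hk : 3 ≤ k) (hr : 2 ≤ r) (a : ℕ → ℕ)
    (ha : IsVec k r a) (θ : ℝ) (hθ : 0 < θ) :
    ∃ n₀ : ℕ, ∀ n : ℕ, n₀ ≤ n → ∀ P : ℕ → Finset (Fin n), ∀ ε : ℕ → ℝ,
      (∀ i j : ℕ, i < r → j < r → i ≠ j → Disjoint (P i) (P j)) →
      (∀ x : Fin n, ∃ i, i < r ∧ x ∈ P i) →
      (∀ i, i < r →
        ((P i).card : ℝ) = (1 + ε i) * ((r * a i + 1 : ℕ) : ℝ) * (n : ℝ) / ((r * k : ℕ) : ℝ)) →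
      ((Finset.range r).sup' (Finset.nonempty_range_iff.mpr (by omega)) fun i => |ε i|) ≤
          1 / (2 * (k : ℝ)) →
      (minDeg (HVa r P a) : ℝ) ≤
        (1 + 4 * (k : ℝ) *
            ((Finset.range r).sup' (Finset.nonempty_range_iff.mpr (by omega)) fun i => |ε i|) + θ) *
          (((n - 1).choose (k - 1) : ℕ) : ℝ) * gfun k r a := by
  obtain ⟨n₀, hn₀⟩ := min_degree_perturbed_upper_general (by omega) (by omega) ha.2 (half_pos hθ)
  refine ⟨n₀, fun n hn P ε hdisj hcov hcard hsup => ?_⟩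
  set δ := (Finset.range r).sup' (Finset.nonempty_range_iff.mpr (by omega)) fun i => |ε i|
  have hε : ∀ i, i < r → |ε i| ≤ δ := fun i hi => le_sup' (fun i => |ε i|) (mem_range.2 hi)
  have hδ₀ : 0 ≤ δ := (abs_nonneg _).trans (hε 0 (by omega))
  have hδ₁ : δ < 1 := hsup.trans_lt <| by
    rw [div_lt_one (by positivity)]
    exact_mod_cast (by omega : 1 < 2 * k)
  have hmin := hn₀ (Fin n)
  rw [Fintype.card_fin] at hmin
  refine (hmin hn P ε δ hdisj hcov hcard hε hδ₁).trans ?_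
  gcongr
  · exact gfun_nonneg k r a
  · exact one_add_half_mul_one_add_pow_le (Nat.sub_le k 1) hδ₀ hsup hθ.le
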